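/- arXiv:1712.00246 — 3 statements merged into one kernel-verified Lean document; each statement's English description precedes it below -/
import Mathlib

section
/- Let φ be a TSL formula, let T_P be the set of predicate terms occurring in φ, and for each output name s let T^s consist of the update terms [s ↜ τ] occurring in φ together with the self-update [s ↜ s]. Let ψ be the LTL formula over atomic propositions T_P (environment/input propositions) and ⋃_s T^s (system/output propositions) obtained from φ by reading each predicate term and each update term as an atomic proposition, conjoined with G ⋀_{s ∈ N_O} ⋁_{τ ∈ T^s} (τ ∧ ⋀_{τ' ∈ T^s, τ' ≠ τ} ¬τ'). Then every Mealy machine 𝕄 = (M, m_I, δ, ℓ̂) with L(𝕄) ⊆ L(ψ) induces a CFM M' with configurations M, initial configuration m_I, configuration update δ, and program update ℓ(P, m, s) = the unique function term τ with [s ↜ τ] ∈ ℓ̂(P, m), such that for every assignment ⟨·⟩ and every run r of M' compatible with ⟨·⟩, the induced computation ς_r satisfies ς_r ⊨ φ under ⟨·⟩. In particular, for every assignment there exists a computation satisfying φ. -/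
set_option autoImplicit false

namespace TSLspec

/-- Function terms over input-signal names `I`, output-signal names `O` and
function names `F` with arities `arF`.  The constructor `init s` is the fresh
`0`-ary constant term `init_s` providing the initial value of the output
signal `s`. -/
inductive FTerm (I O F : Type) (arF : F → ℕ) : Type where
  | inp  : I → FTerm I O F arF
  | out  : O → FTerm I O F arF
  | init : O → FTerm I O F arF
  | app  : (f : F) → (Fin (arF f) → FTerm I O F arF) → FTerm I O F arF

variable {I O F P : Type} {arF : F → ℕ} {arP : P → ℕ}

/-- Predicate terms `p(τ₀, …, τ_{n-1})`. -/
structure PTerm (I O F P : Type) (arF : F → ℕ) (arP : P → ℕ) : Type where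
  pred : P
  args : Fin (arP pred) → FTerm I O F arF

/-- A computation step is a map from output names to function terms; a
computation is an infinite sequence of computation steps. -/
abbrev Computation (I O F : Type) (arF : F → ℕ) : Type :=
  ℕ → O → FTerm I O F arF

/-- Substitute each output name `s` by `c s`. -/
def substOut (c : O → FTerm I O F arF) : FTerm I O F arF → FTerm I O F arF
  | .inp i => .inp i
  | .out s => c s
  | .init s => .init s
  | .app f a => .app f (fun k => substOut c (a k))

/-- Substitute each output name `s` by the constant `init_s`. -/
def substInit : FTerm I O F arF → FTerm I O F arF
  | .inp i => .inp i
  | .out s => .init s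
  | .init s => .init s
  | .app f a => .app f (fun k => substInit (a k))

/-- The evaluation function `η`: `η(ς,t,s) = s` for input names `s`;
`η(ς,0,s) = init_s` for output names `s`; `η(ς,t,s) = η(ς,t-1,ς(t-1)(s))` for
output names `s` and `t > 0`; and `η` commutes with applications. -/
def eta (ς : Computation I O F arF) : ℕ → FTerm I O F arF → FTerm I O F arF
  | 0, τ => substInit τ
  | t + 1, τ => eta ς t (substOut (ς t) τ)

/-- `η` applied to a predicate term (argumentwise). -/
def etaP (ς : Computation I O F arF) (t : ℕ)
    (pt : PTerm I O F P arF arP) : PTerm I O F P arF arP :=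
  ⟨pt.pred, fun k => eta ς t (pt.args k)⟩

/-- An assignment `⟨·⟩`: values for input names, an `n`-ary function on
values for each `n`-ary function name, an `n`-ary Boolean predicate on values
for each `n`-ary predicate name, and an initial value `⟨init_s⟩` for each
output name `s`. -/
structure Assignment (V I O F P : Type) (arF : F → ℕ) (arP : P → ℕ) :
    Type where
  inpVal  : I → V
  fnVal   : (f : F) → (Fin (arF f) → V) → V
  prVal   : (p : P) → (Fin (arP p) → V) → Bool
  initVal : O → V

variable {V : Type}

/-- Evaluation of a function term under an assignment, in an environment
`env` interpreting the output names.  For terms containing no output names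
the result is independent of `env`. -/
def evalF (A : Assignment V I O F P arF arP) (env : O → V) :
    FTerm I O F arF → V
  | .inp i => A.inpVal i
  | .out s => env s
  | .init s => A.initVal s
  | .app f a => A.fnVal f (fun k => evalF A env (a k))

/-- Evaluation of a predicate term. -/
def evalP (A : Assignment V I O F P arF arP) (env : O → V)
    (pt : PTerm I O F P arF arP) : Bool :=
  A.prVal pt.pred (fun k => evalF A env (pt.args k))

/-- TSL formulas. -/
inductive Formula (I O F P : Type) (arF : F → ℕ) (arP : P → ℕ) : Type where
  | predT  : PTerm I O F P arF arP → Formula I O F P arF arP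
  | updT   : O → FTerm I O F arF → Formula I O F P arF arP
  | notT   : Formula I O F P arF arP → Formula I O F P arF arP
  | andT   : Formula I O F P arF arP → Formula I O F P arF arP →
             Formula I O F P arF arP
  | nextT  : Formula I O F P arF arP → Formula I O F P arF arP
  | untilT : Formula I O F P arF arP → Formula I O F P arF arP →
             Formula I O F P arF arP

/-- TSL satisfaction `ς,t ⊨ φ` (under the assignment `A`).  A predicate term
is satisfied iff its `η`-unfolding evaluates to `true` (the unfolding
contains no output names, so the value is independent of the environment and
we quantify over all environments); an update term `[s ↜ τ]` is satisfied
iff `ς(t)(s) = τ` syntactically. -/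
def Sat (A : Assignment V I O F P arF arP) (ς : Computation I O F arF) :
    Formula I O F P arF arP → ℕ → Prop
  | .predT pt, t => ∀ env : O → V, evalP A env (etaP ς t pt) = true
  | .updT s τ, t => ς t s = τ
  | .notT ψ, t => ¬ Sat A ς ψ t
  | .andT ψ θ, t => Sat A ς ψ t ∧ Sat A ς θ t
  | .nextT ψ, t => Sat A ς ψ (t + 1)
  | .untilT θ ψ, t =>
      ∃ u, t ≤ u ∧ Sat A ς ψ u ∧ ∀ t', t ≤ t' → t' < u → Sat A ς θ t'

/-- A TSL formula is realizable iff some computation satisfies it under every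
assignment (over every set of values). -/
def Realizable (φ : Formula I O F P arF arP) : Prop :=
  ∃ ς : Computation I O F arF,
    ∀ (V : Type) (A : Assignment V I O F P arF arP), Sat A ς φ 0

/- Derived TSL operators. -/

/-- A tautology (built from the formula `θ`). -/
def tslTrue (θ : Formula I O F P arF arP) : Formula I O F P arF arP :=
  .notT (.andT θ (.notT θ))

def tslFalse (θ : Formula I O F P arF arP) : Formula I O F P arF arP :=
  .notT (tslTrue θ)

def tslOr (a b : Formula I O F P arF arP) : Formula I O F P arF arP :=
  .notT (.andT (.notT a) (.notT b))

def tslImp (a b : Formula I O F P arF arP) : Formula I O F P arF arP :=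
  .notT (.andT a (.notT b))

def tslIff (a b : Formula I O F P arF arP) : Formula I O F P arF arP :=
  .andT (tslImp a b) (tslImp b a)

/-- Finally: `F θ = true 𝒰 θ`. -/
def tslF (base θ : Formula I O F P arF arP) : Formula I O F P arF arP :=
  .untilT (tslTrue base) θ

/-- Always: `G θ = ¬ F ¬ θ`. -/
def tslG (base θ : Formula I O F P arF arP) : Formula I O F P arF arP :=
  .notT (tslF base (.notT θ))

def bigAndT (base : Formula I O F P arF arP)
    (l : List (Formula I O F P arF arP)) : Formula I O F P arF arP :=
  l.foldr .andT (tslTrue base)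

def bigOrT (base : Formula I O F P arF arP)
    (l : List (Formula I O F P arF arP)) : Formula I O F P arF arP :=
  l.foldr tslOr (tslFalse base)

end TSLspec
namespace TSLspec

variable {I O F P : Type} {arF : F → ℕ} {arP : P → ℕ} {V : Type}

/-- A Control Flow Model (CFM): finite sets `TP` of predicate terms and `TF`
of function terms, a finite set `Q` of configurations with initial
configuration `qI`, a configuration update `trans` and a program update
`label`. -/
structure CFM (I O F P : Type) (arF : F → ℕ) (arP : P → ℕ) : Type 1 where
  TP : Finset (PTerm I O F P arF arP)
  TF : Finset (FTerm I O F arF)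
  Q : Type
  finQ : Finite Q
  qI : Q
  trans : Set (PTerm I O F P arF arP) → Q → Q
  label : Set (PTerm I O F P arF arP) → Q → O → FTerm I O F arF

/-- An infinite sequence of computation steps and configurations. -/
abbrev CFM.RunSeq (M : CFM I O F P arF arP) : Type :=
  ℕ → (O → FTerm I O F arF) × M.Q

/-- The computation induced by a run. -/
def CFM.RunSeq.comp {M : CFM I O F P arF arP} (r : M.RunSeq) :
    Computation I O F arF := fun t => (r t).1

/-- A run starts in the initial configuration. -/
def CFM.IsRun (M : CFM I O F P arF arP) (r : M.RunSeq) : Prop :=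
  (r 0).2 = M.qI

/-- `P_t`: the set of predicate terms of `M.TP` whose `η`-unfolding along `ς`
at time `t` evaluates to `true` under the assignment `A`. -/
def truePreds (M : CFM I O F P arF arP) (A : Assignment V I O F P arF arP)
    (ς : Computation I O F arF) (t : ℕ) :
    Set (PTerm I O F P arF arP) :=
  {pt | pt ∈ M.TP ∧ ∀ env : O → V, evalP A env (etaP ς t pt) = true}

/-- Compatibility of a run with an assignment. -/
def Compatible (M : CFM I O F P arF arP) (A : Assignment V I O F P arF arP)
    (r : M.RunSeq) : Prop :=
  ∀ t : ℕ,
    (∀ s : O, (r t).1 s = M.label (truePreds M A r.comp t) (r t).2 s) ∧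
    (r (t + 1)).2 = M.trans (truePreds M A r.comp t) (r t).2

end TSLspec
namespace TSLspec

/-- LTL formulas over atomic propositions `AP`. -/
inductive LTL (AP : Type) : Type where
  | atom   : AP → LTL AP
  | notL   : LTL AP → LTL AP
  | andL   : LTL AP → LTL AP → LTL AP
  | nextL  : LTL AP → LTL AP
  | untilL : LTL AP → LTL AP → LTL AP

/-- LTL satisfaction `σ,t ⊨ φ` over sequences `σ : ℕ → Set AP`. -/
def LSat {AP : Type} (σ : ℕ → Set AP) : LTL AP → ℕ → Prop
  | .atom a, t => a ∈ σ t
  | .notL ψ, t => ¬ LSat σ ψ t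
  | .andL ψ θ, t => LSat σ ψ t ∧ LSat σ θ t
  | .nextL ψ, t => LSat σ ψ (t + 1)
  | .untilL θ ψ, t =>
      ∃ u, t ≤ u ∧ LSat σ ψ u ∧ ∀ t', t ≤ t' → t' < u → LSat σ θ t'

/-- The language of an LTL formula. -/
def LLang {AP : Type} (ψ : LTL AP) : Set (ℕ → Set AP) :=
  {σ | LSat σ ψ 0}

/- Derived LTL operators. -/

def ltrue {AP : Type} (α : LTL AP) : LTL AP := .notL (.andL α (.notL α))

def lfalse {AP : Type} (α : LTL AP) : LTL AP := .notL (ltrue α)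

def lorL {AP : Type} (x y : LTL AP) : LTL AP :=
  .notL (.andL (.notL x) (.notL y))

/-- Always: `G θ = ¬(true 𝒰 ¬θ)`. -/
def lG {AP : Type} (α θ : LTL AP) : LTL AP :=
  .notL (.untilL (ltrue α) (.notL θ))

def bigAndL {AP : Type} (α : LTL AP) (l : List (LTL AP)) : LTL AP :=
  l.foldr .andL (ltrue α)

def bigOrL {AP : Type} (α : LTL AP) (l : List (LTL AP)) : LTL AP :=
  l.foldr lorL (lfalse α)

end TSLspec
namespace TSLspec

variable {I O F P : Type} {arF : F → ℕ} {arP : P → ℕ}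

/-- Atomic propositions for the LTL encoding: predicate terms (input
propositions) and update terms `[s ↜ τ]`, encoded as pairs `(s, τ)`
(output propositions). -/
abbrev AtomT (I O F P : Type) (arF : F → ℕ) (arP : P → ℕ) : Type :=
  PTerm I O F P arF arP ⊕ (O × FTerm I O F arF)

/-- Reading each predicate term and each update term of a TSL formula as an
atomic proposition yields an LTL formula. -/
def toLTL : Formula I O F P arF arP → LTL (AtomT I O F P arF arP)
  | .predT pt => .atom (.inl pt)
  | .updT s τ => .atom (.inr (s, τ))
  | .notT ψ => .notL (toLTL ψ)
  | .andT ψ θ => .andL (toLTL ψ) (toLTL θ)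
  | .nextT ψ => .nextL (toLTL ψ)
  | .untilT θ ψ => .untilL (toLTL θ) (toLTL ψ)

/-- The predicate terms occurring in a TSL formula. -/
def predTermsList : Formula I O F P arF arP → List (PTerm I O F P arF arP)
  | .predT pt => [pt]
  | .updT _ _ => []
  | .notT ψ => predTermsList ψ
  | .andT ψ θ => predTermsList ψ ++ predTermsList θ
  | .nextT ψ => predTermsList ψ
  | .untilT θ ψ => predTermsList θ ++ predTermsList ψ

/-- The update terms occurring in a TSL formula (as pairs `(s, τ)`). -/
def updTermsList : Formula I O F P arF arP → List (O × FTerm I O F arF)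
  | .predT _ => []
  | .updT s τ => [(s, τ)]
  | .notT ψ => updTermsList ψ
  | .andT ψ θ => updTermsList ψ ++ updTermsList θ
  | .nextT ψ => updTermsList ψ
  | .untilT θ ψ => updTermsList θ ++ updTermsList ψ

/-- `T^s_{◁/id}`: the update terms for the output name `s` occurring in `φ`
together with the self update `[s ↜ s]`. -/
def updIdTerms [DecidableEq O] (φ : Formula I O F P arF arP) (s : O) :
    List (FTerm I O F arF) :=
  ((updTermsList φ).filter (fun u => u.1 = s)).map Prod.snd ++ [.out s]

open Classical in
/-- For the output name `s`: exactly one update proposition of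
`T^s_{◁/id}` holds, i.e. `⋁_{τ ∈ T^s} (τ ∧ ⋀_{τ' ∈ T^s, τ' ≠ τ} ¬ τ')`. -/
noncomputable def exactlyOne [DecidableEq O] (φ : Formula I O F P arF arP)
    (s : O) : LTL (AtomT I O F P arF arP) :=
  bigOrL (toLTL φ)
    ((updIdTerms φ s).map (fun τ =>
      LTL.andL (.atom (.inr (s, τ)))
        (bigAndL (toLTL φ)
          (((updIdTerms φ s).filter (fun τ' => τ' ≠ τ)).map
            (fun τ' => LTL.notL (.atom (.inr (s, τ'))))))))

/-- The LTL encoding `ψ` of the TSL formula `φ`: `φ` (with terms read as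
atomic propositions) conjoined with
`G ⋀_{s ∈ N_O} ⋁_{τ ∈ T^s} (τ ∧ ⋀_{τ' ∈ T^s, τ' ≠ τ} ¬ τ')`. -/
noncomputable def ltlEncoding [DecidableEq O] [Fintype O]
    (φ : Formula I O F P arF arP) : LTL (AtomT I O F P arF arP) :=
  .andL (toLTL φ)
    (lG (toLTL φ)
      (bigAndL (toLTL φ)
        ((Finset.univ : Finset O).toList.map (exactlyOne φ))))

/-- A Mealy machine with input letters `Λi` and output letters `Λo`: a finite
state set `M` with initial state `mI`, transition function `trans` and output
function `out`. -/
structure Mealy (Λi Λo : Type) : Type 1 where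
  M : Type
  finM : Finite M
  mI : M
  trans : Λi → M → M
  out : Λi → M → Λo

/-- The state sequence of a Mealy machine on an input sequence. -/
def Mealy.states {Λi Λo : Type} (𝕄 : Mealy Λi Λo) (ι : ℕ → Λi) : ℕ → 𝕄.M
  | 0 => 𝕄.mI
  | t + 1 => 𝕄.trans (ι t) (𝕄.states ι t)

/-- The sequence over `2^{AP}` produced by a Mealy machine (over subsets of
input and output propositions) on an input sequence `ι`:
`σ(t) = ι(t) ∪ ℓ̂(ι(t), m_t)`. -/
def mealyWord {a b : Type} (𝕄 : Mealy (Set a) (Set b)) (ι : ℕ → Set a) :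
    ℕ → Set (a ⊕ b) :=
  fun t => (Sum.inl '' ι t) ∪ (Sum.inr '' 𝕄.out (ι t) (𝕄.states ι t))

/-- The language of a Mealy machine, with input letters ranging over subsets
of the designated set `TPset` of input propositions. -/
def mealyLang {a b : Type} (𝕄 : Mealy (Set a) (Set b)) (TPset : Set a) :
    Set (ℕ → Set (a ⊕ b)) :=
  {σ | ∃ ι : ℕ → Set a, (∀ t, ι t ⊆ TPset) ∧ σ = mealyWord 𝕄 ι}

open Classical in
/-- The CFM induced by a Mealy machine realizing the LTL encoding of `φ`:
configurations are the Mealy states, the configuration update is the Mealy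
transition function, and the program update assigns `ℓ(P, m, s)` the unique
function term `τ` with `[s ↜ τ] ∈ ℓ̂(P, m)`. -/
noncomputable def inducedCFM (φ : Formula I O F P arF arP)
    (𝕄 : Mealy (Set (PTerm I O F P arF arP)) (Set (O × FTerm I O F arF))) :
    CFM I O F P arF arP where
  TP := (predTermsList φ).toFinset
  TF := ((updTermsList φ).map Prod.snd).toFinset
  Q := 𝕄.M
  finQ := 𝕄.finM
  qI := 𝕄.mI
  trans := 𝕄.trans
  label := fun Pm q s =>
    if h : ∃! τ : FTerm I O F arF, (s, τ) ∈ 𝕄.out Pm q then h.exists.choose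
    else .out s

theorem lsat_toLTL {V : Type} (A : Assignment V I O F P arF arP) (ς : Computation I O F arF)
    (σ : ℕ → Set (AtomT I O F P arF arP))
    (hu : ∀ t s τ, (Sum.inr (s, τ) ∈ σ t ↔ ς t s = τ))
    (φ : Formula I O F P arF arP)
    (hp : ∀ pt ∈ predTermsList φ, ∀ t, (Sum.inl pt ∈ σ t ↔
      ∀ env : O → V, evalP A env (etaP ς t pt) = true)) :
    ∀ t, LSat σ (toLTL φ) t ↔ Sat A ς φ t := by
  induction φ with
  | predT pt => intro t; exact hp pt (by simp [predTermsList]) t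
  | updT s τ => intro t; exact hu t s τ
  | notT ψ ih => intro t; simp only [toLTL, LSat, Sat]; rw [ih hp]
  | andT a b iha ihb =>
    intro t
    simp only [toLTL, LSat, Sat]
    rw [iha (fun pt h => hp pt (by simp [predTermsList, h])),
      ihb (fun pt h => hp pt (by simp [predTermsList, h]))]
  | nextT ψ ih => intro t; simp only [toLTL, LSat, Sat]; rw [ih hp]
  | untilT a b iha ihb =>
    intro t
    simp only [toLTL, LSat, Sat]
    simp only [iha (fun pt h => hp pt (by simp [predTermsList, h])),
      ihb (fun pt h => hp pt (by simp [predTermsList, h]))]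

theorem lsat_bigAndL {AP : Type} (σ : ℕ → Set AP) (α : LTL AP) (t : ℕ) (l : List (LTL AP)) :
    LSat σ (bigAndL α l) t ↔ ∀ x ∈ l, LSat σ x t := by
  induction l with
  | nil => simp [bigAndL, ltrue, LSat]
  | cons a l ih =>
    have : bigAndL α (a :: l) = .andL a (bigAndL α l) := rfl
    rw [this]; simp only [LSat, ih, List.forall_mem_cons]

theorem lsat_bigOrL {AP : Type} (σ : ℕ → Set AP) (α : LTL AP) (t : ℕ) (l : List (LTL AP)) :
    LSat σ (bigOrL α l) t ↔ ∃ x ∈ l, LSat σ x t := by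
  induction l with
  | nil => simp [bigOrL, lfalse, ltrue, LSat]
  | cons a l ih =>
    have : bigOrL α (a :: l) = lorL a (bigOrL α l) := rfl
    rw [this]; simp only [lorL, LSat, ih, List.mem_cons, exists_eq_or_imp]
    rw [not_and_or, not_not, not_not]

theorem lsat_lG {AP : Type} (σ : ℕ → Set AP) (α θ : LTL AP)
    (h : LSat σ (lG α θ) 0) (t : ℕ) : LSat σ θ t := by
  by_contra hc
  exact h ⟨t, Nat.zero_le _, hc, fun t' _ _ => fun h => h.2 h.1⟩

theorem lsat_exactlyOne [DecidableEq O] (φ : Formula I O F P arF arP) (s : O)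
    (σ : ℕ → Set (AtomT I O F P arF arP)) (t : ℕ) (h : LSat σ (exactlyOne φ s) t) :
    ∃ τ, Sum.inr (s, τ) ∈ σ t ∧
      ∀ τ' ∈ updIdTerms φ s, Sum.inr (s, τ') ∈ σ t → τ' = τ := by
  unfold exactlyOne at h
  rw [lsat_bigOrL] at h
  obtain ⟨x, hx, h⟩ := h
  obtain ⟨τ, hτ, rfl⟩ := List.mem_map.1 hx
  obtain ⟨h1, h2⟩ := h
  refine ⟨τ, h1, fun τ' hτ' h' => ?_⟩
  by_contra hne
  rw [lsat_bigAndL] at h2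
  exact h2 _ (List.mem_map.2 ⟨τ', List.mem_filter.2 ⟨hτ', by simpa using hne⟩, rfl⟩) h'

theorem eta_congr (ς ς' : Computation I O F arF) (t : ℕ) (h : ∀ u < t, ς u = ς' u) :
    ∀ τ, eta ς t τ = eta ς' t τ := by
  induction t with
  | zero => intro τ; rfl
  | succ t ih =>
    intro τ
    simp only [eta]
    rw [h t (Nat.lt_succ_self t), ih (fun u hu => h u (by omega))]

theorem truePreds_congr {V : Type} (M : CFM I O F P arF arP) (A : Assignment V I O F P arF arP)
    (ς ς' : Computation I O F arF) (t : ℕ) (h : ∀ u < t, ς u = ς' u) :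
    truePreds M A ς t = truePreds M A ς' t := by
  unfold truePreds etaP
  simp only [eta_congr ς ς' t h]

/-- History of the run built step by step. -/
noncomputable def hist {V : Type} (M : CFM I O F P arF arP) (A : Assignment V I O F P arF arP) :
    ℕ → Computation I O F arF × M.Q
  | 0 => (fun _ s => .out s, M.qI)
  | t + 1 =>
    (Function.update (hist M A t).1 t
        (M.label (truePreds M A (hist M A t).1 t) (hist M A t).2),
      M.trans (truePreds M A (hist M A t).1 t) (hist M A t).2)

theorem hist_stable {V : Type} (M : CFM I O F P arF arP) (A : Assignment V I O F P arF arP)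
    (u : ℕ) : ∀ t, u < t → (hist M A t).1 u = (hist M A (u + 1)).1 u := by
  intro t ht
  induction t with
  | zero => omega
  | succ t ih =>
    rcases Nat.lt_succ_iff_lt_or_eq.1 ht with h | h
    · rw [← ih h]
      show Function.update _ _ _ _ = _
      rw [Function.update_of_ne (by omega)]
    · rw [h]

theorem exists_run {V : Type} (M : CFM I O F P arF arP) (A : Assignment V I O F P arF arP) :
    ∃ r : M.RunSeq, M.IsRun r ∧ Compatible M A r := by
  refine ⟨fun t => ((hist M A (t + 1)).1 t, (hist M A t).2), rfl, fun t => ?_⟩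
  have key : truePreds M A (CFM.RunSeq.comp (M := M)
      (fun t => ((hist M A (t + 1)).1 t, (hist M A t).2))) t
      = truePreds M A (hist M A t).1 t :=
    truePreds_congr M A _ _ t (fun u hu => (hist_stable M A u t hu).symm)
  rw [key]
  refine ⟨fun s => ?_, rfl⟩
  show Function.update (hist M A t).1 t _ t s = _
  rw [Function.update_self]

theorem run_sat [DecidableEq O] [Fintype O]
    (φ : Formula I O F P arF arP)
    (𝕄 : Mealy (Set (PTerm I O F P arF arP)) (Set (O × FTerm I O F arF)))
    (hOut : ∀ (Pm : Set (PTerm I O F P arF arP)) (m : 𝕄.M),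
        𝕄.out Pm m ⊆ {u : O × FTerm I O F arF | u.2 ∈ updIdTerms φ u.1})
    (hL : mealyLang 𝕄 {pt | pt ∈ predTermsList φ} ⊆ LLang (ltlEncoding φ))
    (V : Type) (A : Assignment V I O F P arF arP)
    (r : (inducedCFM φ 𝕄).RunSeq)
    (h0 : (inducedCFM φ 𝕄).IsRun r) (hc : Compatible (inducedCFM φ 𝕄) A r) :
    Sat A r.comp φ 0 := by
  classical
  set ι : ℕ → Set (PTerm I O F P arF arP) :=
    fun t => truePreds (inducedCFM φ 𝕄) A r.comp t with hι
  have hTP : ∀ pt, pt ∈ (inducedCFM φ 𝕄).TP ↔ pt ∈ predTermsList φ := by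
    intro pt; simp [inducedCFM]
  have hst : ∀ t, (r t).2 = 𝕄.states ι t := by
    intro t
    induction t with
    | zero => exact h0
    | succ t ih => rw [(hc t).2, ih]; rfl
  obtain ⟨hφ, hG⟩ := hL ⟨ι, fun t pt h => (hTP pt).1 h.1, rfl⟩
  refine (lsat_toLTL A r.comp (mealyWord 𝕄 ι) ?_ φ ?_ 0).1 hφ
  · intro t s τ
    have hG := lsat_lG _ _ _ hG t
    rw [lsat_bigAndL] at hG
    obtain ⟨τ₀, h1, h2⟩ := lsat_exactlyOne φ s _ t
      (hG _ (List.mem_map.2 ⟨s, by simp, rfl⟩))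
    have hm : ∀ τ, Sum.inr (s, τ) ∈ mealyWord 𝕄 ι t ↔
        (s, τ) ∈ 𝕄.out (ι t) (𝕄.states ι t) := by
      intro τ; simp [mealyWord]
    have hex : ∃! τ : FTerm I O F arF, (s, τ) ∈ 𝕄.out (ι t) (𝕄.states ι t) :=
      ⟨τ₀, (hm _).1 h1, fun τ' h' => h2 τ' (hOut _ _ h') ((hm _).2 h')⟩
    have hlab : r.comp t s = hex.exists.choose := by
      have h := (hc t).1 s
      rw [hst t] at h
      refine h.trans ?_
      show dite _ _ _ = _
      exact dif_pos hex
    rw [hm, hlab]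
    constructor
    · intro h; exact hex.unique hex.exists.choose_spec h
    · rintro rfl; exact hex.exists.choose_spec
  · intro pt hpt t
    have : Sum.inl pt ∈ mealyWord 𝕄 ι t ↔ pt ∈ ι t := by simp [mealyWord]
    rw [this]
    exact ⟨fun h => h.2, fun h => ⟨(hTP pt).2 hpt, h⟩⟩

/-- **Theorem 1 of the paper.**  Let `φ` be a TSL formula and
`ψ` its LTL encoding over the input propositions `T_P` (the predicate terms
occurring in `φ`) and the output propositions `⋃_s T^s_{◁/id}`.  Every Mealy
machine `𝕄` over these propositions with `L(𝕄) ⊆ L(ψ)` induces a CFM such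
that for every assignment `⟨·⟩`, every run compatible with `⟨·⟩` induces a
computation satisfying `φ` under `⟨·⟩`.  In particular, for every assignment
there exists a computation satisfying `φ`. -/
theorem mealy_to_cfm_sound [DecidableEq O] [Fintype O]
    (φ : Formula I O F P arF arP)
    (𝕄 : Mealy (Set (PTerm I O F P arF arP)) (Set (O × FTerm I O F arF)))
    (hOut : ∀ (Pm : Set (PTerm I O F P arF arP)) (m : 𝕄.M),
        𝕄.out Pm m ⊆ {u : O × FTerm I O F arF | u.2 ∈ updIdTerms φ u.1})
    (hL : mealyLang 𝕄 {pt | pt ∈ predTermsList φ} ⊆ LLang (ltlEncoding φ)) :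
    (∀ (V : Type) (A : Assignment V I O F P arF arP)
        (r : (inducedCFM φ 𝕄).RunSeq),
        (inducedCFM φ 𝕄).IsRun r → Compatible (inducedCFM φ 𝕄) A r →
        Sat A r.comp φ 0) ∧
    (∀ (V : Type) (A : Assignment V I O F P arF arP),
        ∃ ς : Computation I O F arF, Sat A ς φ 0) := by
  refine ⟨run_sat φ 𝕄 hOut hL, fun V A => ?_⟩
  obtain ⟨r, h0, hc⟩ := exists_run (inducedCFM φ 𝕄) A
  exact ⟨r.comp, run_sat φ 𝕄 hOut hL V A r h0 hc⟩


end TSLspec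
end

section
/- Let M = (T_P, T_F, Q, q_I, δ, ℓ) be a CFM over names with no input names (N_I = ∅), and let ⟨·⟩ be an assignment. Define by recursion on t ∈ ℕ: the environment e_0(s) = ⟨init_s⟩ for every output name s; P_t = {τ_p ∈ T_P | τ_p evaluates to true in the environment interpreting each output name s' by e_t(s') and each function/predicate name by ⟨·⟩}; q_0 = q_I and q_{t+1} = δ(P_t, q_t); and e_{t+1}(s) = the value of the function term ℓ(P_t, q_t, s) evaluated in the environment interpreting each output name s' by e_t(s') and each function name by ⟨·⟩. Then, for the unique run r of M compatible with ⟨·⟩ and for every t ∈ ℕ and every output name s, one has e_t(s) = ⟨η(ς_r, t, s)⟩. That is, the step-by-step (functional-reactive, Mealy-style) execution of the CFM computes exactly the semantics of the CFM defined via η-evaluation along its compatible run. -/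
set_option autoImplicit false

namespace TSLspec

/-- The step-by-step (functional-reactive, Mealy-style) execution of a CFM
under an assignment, for a setting with no input names: at each time `t` it
records the current values `e_t : O → V` of the output signals together with
the current configuration `q_t`.  Initially `e_0(s) = ⟨init_s⟩` and
`q_0 = q_I`; at each step the set `P_t` of predicate terms of `TP` that
evaluate to `true` in the environment `e_t` is computed, the next values are
obtained by evaluating the terms `ℓ(P_t, q_t, s)` in the environment `e_t`,
and the configuration is updated to `δ(P_t, q_t)`. -/
def exec {I O F P : Type} {arF : F → ℕ} {arP : P → ℕ} {V : Type}
    (M : CFM I O F P arF arP) (A : Assignment V I O F P arF arP) :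
    ℕ → (O → V) × M.Q
  | 0 => (fun s => A.initVal s, M.qI)
  | t + 1 =>
      let e := (exec M A t).1
      let q := (exec M A t).2
      let Pt : Set (PTerm I O F P arF arP) :=
        {pt | pt ∈ M.TP ∧ evalP A e pt = true}
      (fun s => evalF A e (M.label Pt q s), M.trans Pt q)

theorem evalF_substOut_aux {I O F P : Type} {arF : F → ℕ} {arP : P → ℕ} {V : Type}
    (A : Assignment V I O F P arF arP) (env : O → V) (c : O → FTerm I O F arF)
    (τ : FTerm I O F arF) :
    evalF A env (substOut c τ) = evalF A (fun s => evalF A env (c s)) τ := by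
  induction τ with
  | inp i => rfl
  | out s => rfl
  | init s => rfl
  | app f a ih => simp only [substOut, evalF, ih]

theorem evalF_substInit_aux {I O F P : Type} {arF : F → ℕ} {arP : P → ℕ} {V : Type}
    (A : Assignment V I O F P arF arP) (env : O → V)
    (τ : FTerm I O F arF) :
    evalF A env (substInit τ) = evalF A (fun s => A.initVal s) τ := by
  induction τ with
  | inp i => rfl
  | out s => rfl
  | init s => rfl
  | app f a ih => simp only [substInit, evalF, ih]

theorem exec_invariant_aux {I O F P : Type} {arF : F → ℕ} {arP : P → ℕ} {V : Type}
    (M : CFM I O F P arF arP)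
    (A : Assignment V I O F P arF arP) (r : M.RunSeq)
    (hrun : M.IsRun r) (hcomp : Compatible M A r) (t : ℕ) :
    (exec M A t).2 = (r t).2 ∧ ∀ (τ : FTerm I O F arF) (env : O → V),
      evalF A env (eta r.comp t τ) = evalF A (exec M A t).1 τ := by
  induction t with
  | zero => exact ⟨hrun.symm, fun τ env => evalF_substInit_aux A env τ⟩
  | succ t ih =>
    obtain ⟨hq, he⟩ := ih
    have hP : truePreds M A r.comp t =
        {pt | pt ∈ M.TP ∧ evalP A (exec M A t).1 pt = true} := by
      ext pt
      have h : ∀ env : O → V, evalP A env (etaP r.comp t pt) = evalP A (exec M A t).1 pt := by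
        intro env
        simp only [evalP, etaP, he]
      simp only [truePreds, Set.mem_setOf_eq, h]
      exact ⟨fun h => ⟨h.1, h.2 (exec M A t).1⟩, fun h => ⟨h.1, fun _ => h.2⟩⟩
    obtain ⟨h1, h2⟩ := hcomp t
    rw [hP, ← hq] at h2
    refine ⟨h2.symm, fun τ env => ?_⟩
    have h3 : (exec M A (t + 1)).1 = fun s => evalF A (exec M A t).1 (r.comp t s) := by
      funext s
      have h4 := h1 s
      rw [hP, ← hq] at h4
      change _ = evalF A (exec M A t).1 ((r t).1 s)
      rw [h4]
      rfl
    rw [h3, eta, he, evalF_substOut_aux]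

/-- Let `M` be a CFM over names without input names and let
`⟨·⟩` be an assignment.  Then for the (unique) run `r` of `M` compatible with
`⟨·⟩`, for every `t` and every output name `s`, the value `e_t(s)` computed
by the step-by-step execution equals `⟨η(ς_r, t, s)⟩` (the `η`-unfolding
contains no output names, so its value is independent of the environment,
over which we quantify). -/
theorem exec_eq_eta_semantics {I O F P : Type} {arF : F → ℕ} {arP : P → ℕ}
    (hI : IsEmpty I) (M : CFM I O F P arF arP) (V : Type)
    (A : Assignment V I O F P arF arP) (r : M.RunSeq)
    (hrun : M.IsRun r) (hcomp : Compatible M A r) :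
    ∀ (t : ℕ) (s : O) (env : O → V),
      (exec M A t).1 s = evalF A env (eta r.comp t (.out s)) := by
  intro t s env
  exact ((exec_invariant_aux M A r hrun hcomp t).2 (.out s) env).symm

end TSLspec
end

section
/- Suppose there are no input names (N_I = ∅). For every computation ς, every assignment ⟨·⟩, every time t ∈ ℕ, and every function or predicate term τ, the value ⟨η(ς,t,τ)⟩ equals the evaluation of the term τ itself in the environment that interprets each output name s by ⟨η(ς,t,s)⟩ and interprets each function and predicate name by ⟨·⟩. (Unfolding a term through the computation history via η and then evaluating gives the same result as evaluating the term directly in the environment of current signal values.) -/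
set_option autoImplicit false

namespace TSLspec

theorem eta_inp_aux {I O F : Type} {arF : F → ℕ} (ς : Computation I O F arF) (t : ℕ) (i : I) :
    eta ς t (.inp i) = .inp i := by
  induction t with
  | zero => rfl
  | succ t ih => exact ih

theorem eta_init_aux {I O F : Type} {arF : F → ℕ} (ς : Computation I O F arF) (t : ℕ) (s : O) :
    eta ς t (.init s) = .init s := by
  induction t with
  | zero => rfl
  | succ t ih => exact ih

theorem eta_app_aux {I O F : Type} {arF : F → ℕ} (ς : Computation I O F arF) (t : ℕ) (f : F)
    (a : Fin (arF f) → FTerm I O F arF) :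
    eta ς t (.app f a) = .app f (fun k => eta ς t (a k)) := by
  induction t generalizing a with
  | zero => rfl
  | succ t ih => exact ih (fun k => substOut (ς t) (a k))

/-- Assume there are no input names (`N_I = ∅`).  For every
computation `ς`, assignment `⟨·⟩`, time `t` and every function or predicate
term `τ`, the value `⟨η(ς,t,τ)⟩` equals the evaluation of `τ` itself in the
environment interpreting each output name `s` by `⟨η(ς,t,s)⟩` (and each
function/predicate name by `⟨·⟩`). -/
theorem eval_eta_eq_eval_in_current_env {I O F P : Type} {arF : F → ℕ}
    {arP : P → ℕ} (hI : IsEmpty I) (V : Type)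
    (A : Assignment V I O F P arF arP) (ς : Computation I O F arF) (t : ℕ) :
    (∀ (τ : FTerm I O F arF) (env : O → V),
        evalF A env (eta ς t τ) =
          evalF A (fun s => evalF A env (eta ς t (.out s))) τ) ∧
    (∀ (pt : PTerm I O F P arF arP) (env : O → V),
        evalP A env (etaP ς t pt) =
          evalP A (fun s => evalF A env (eta ς t (.out s))) pt) := by
  have h : ∀ (τ : FTerm I O F arF) (env : O → V),
        evalF A env (eta ς t τ) =
          evalF A (fun s => evalF A env (eta ς t (.out s))) τ := by
    intro τ env
    induction τ with
    | inp i => rw [eta_inp_aux]; rfl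
    | out s => rfl
    | init s => rw [eta_init_aux]; rfl
    | app f a ih =>
      rw [eta_app_aux]
      exact congrArg (A.fnVal f) (funext ih)
  refine ⟨h, fun pt env => ?_⟩
  exact congrArg (A.prVal pt.pred) (funext fun k => h (pt.args k) env)

end TSLspec
end
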